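/- Let (Ω, P, π) be a finite irreducible lazy reversible Markov chain and let x, y, z ∈ Ω. Then for all t ≥ 0, P^t(x,y)/π(y) ≥ Σ_{k ≤ t} P[T_z^{x,y} = k] · P^{t-k}(z,z)/π(z) ≥ P[T_z^{x,y} ≤ t], where T_z^{x,y} is distributed as the sum of two independent copies of the hitting time T_z of z, one started from x and one started from y. -/

import Mathlib

open Finset

/-- `hitProb P z t x` is the probability that the chain with transition matrix `P`
started at `x` hits `z` for the first time exactly at time `t`, i.e. `P_x[T_z = t]`. -/
noncomputable def hitProb {Ω : Type*} [Fintype Ω] [DecidableEq Ω]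
    (P : Matrix Ω Ω ℝ) (z : Ω) : ℕ → Ω → ℝ
  | 0, x => if x = z then 1 else 0
  | (t + 1), x => if x = z then 0 else ∑ y, P x y * hitProb P z t y

/-- `hitConv P z x y k = P[T_z^{x,y} = k]`, the convolution of the hitting time
distributions of `z` started from `x` and from `y`. -/
noncomputable def hitConv {Ω : Type*} [Fintype Ω] [DecidableEq Ω]
    (P : Matrix Ω Ω ℝ) (z x y : Ω) (k : ℕ) : ℝ :=
  ∑ j ∈ Finset.range (k + 1), hitProb P z j x * hitProb P z (k - j) y

/-!
Decompose the paths of length `t` from `x` to `y` according to their first visit to `z` and, after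
reversing the remaining piece with respect to `π`, according to its first visit to `z` from `y`.
Keeping only the paths that do visit `z` gives the first inequality.

The second one follows from `π z ≤ (P ^ s) z z`. With `D = diagonal π`, reversibility says that
`D * P` is symmetric, and laziness makes it diagonally dominant, hence positive semidefinite by
Gershgorin's theorem. Then every `D * P ^ s` is positive semidefinite, and Cauchy–Schwarz for this
form, applied to the indicator of `z` and the constant `1`, reads `π z ^ 2 ≤ π z * (P ^ s) z z`.
-/

lemma sum_range_convolution_assoc {R : Type*} [NonUnitalSemiring R] (f g a : ℕ → R) (t : ℕ) :
    ∑ k ∈ range (t + 1), (∑ j ∈ range (k + 1), f j * g (k - j)) * a (t - k) =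
      ∑ j ∈ range (t + 1), f j * ∑ i ∈ range (t - j + 1), g i * a (t - j - i) := by
  calc
    _ = ∑ k ∈ range (t + 1), ∑ j ∈ range (k + 1), f j * (g (k - j) * a (t - j - (k - j))) := by
      refine sum_congr rfl fun k _ => ?_
      rw [sum_mul]
      refine sum_congr rfl fun j hj => ?_
      rw [mul_assoc, Nat.sub_sub_sub_cancel_right (mem_range_succ_iff.mp hj)]
    _ = ∑ j ∈ range (t + 1), ∑ i ∈ range (t + 1 - j), f j * (g i * a (t - j - i)) :=
      sum_range_diag_flip (t + 1) fun j i => f j * (g i * a (t - j - i))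
    _ = _ := by
      refine sum_congr rfl fun j hj => ?_
      rw [mul_sum, Nat.sub_add_comm (mem_range_succ_iff.mp hj)]

section Matrix

open Matrix
open scoped ComplexOrder

variable {n : Type*} [Fintype n]

lemma semiconjBy_conjTranspose {R : Type*} [NonUnitalSemiring R] [StarRing R] {M A : Matrix n n R}
    (hM : M.IsHermitian) (hMA : (M * A).IsHermitian) : SemiconjBy M A Aᴴ := by
  rw [SemiconjBy, ← hMA.eq, conjTranspose_mul, hM.eq]

lemma sq_sum_row_le_diag_mul_sum {R : Type*} [CommRing R] [LinearOrder R] [IsStrictOrderedRing R]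
    [StarRing R] [TrivialStar R] {A : Matrix n n R} (hA : A.PosSemidef) (i : n) :
    (∑ j, A i j) ^ 2 ≤ A i i * ∑ k, ∑ j, A k j := by
  classical
  have hnonneg (v : n → R) : 0 ≤ toBilin' A v v := by
    simpa only [toBilin'_apply', star_trivial] using hA.dotProduct_mulVec_nonneg v
  have hsymm (j : n) : A j i = A i j := by rw [← hA.1.apply i j, star_trivial]
  have hcs := LinearMap.BilinForm.apply_mul_apply_le_of_forall_zero_le (toBilin' A) hnonneg
    (Pi.single i 1) 1
  simpa [toBilin'_apply, Pi.single_apply, hsymm, ← sq] using hcs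

variable [DecidableEq n]

lemma posSemidef_of_sum_norm_erase_le_diag {𝕜 : Type*} [RCLike 𝕜] {A : Matrix n n 𝕜}
    (hA : A.IsHermitian) (hdiag : ∀ i, ∑ j ∈ univ.erase i, ‖A i j‖ ≤ RCLike.re (A i i)) :
    A.PosSemidef := by
  refine hA.posSemidef_iff_eigenvalues_nonneg.mpr fun i => ?_
  have hmem : (hA.eigenvalues i : 𝕜) ∈ spectrum 𝕜 (toLin' A) := by
    rw [spectrum_toLin']
    exact spectrum.algebraMap_mem_iff 𝕜 |>.mpr (hA.eigenvalues_mem_spectrum_real i)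
  obtain ⟨k, hk⟩ := eigenvalue_mem_ball (Module.End.hasEigenvalue_iff_mem_spectrum.mpr hmem)
  have hre : RCLike.re (A k k) - hA.eigenvalues i ≤ RCLike.re (A k k) :=
    calc
      _ = RCLike.re (A k k - hA.eigenvalues i) := by rw [map_sub, RCLike.ofReal_re]
      _ ≤ ‖A k k - hA.eigenvalues i‖ := RCLike.re_le_norm _
      _ ≤ ∑ j ∈ univ.erase k, ‖A k j‖ := mem_closedBall_iff_norm'.mp hk
      _ ≤ _ := hdiag k
  exact sub_le_self_iff _ |>.mp hre

lemma isHermitian_mul_pow {R : Type*} [Semiring R] [StarRing R] {M A : Matrix n n R}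
    (hM : M.IsHermitian) (hMA : (M * A).IsHermitian) (s : ℕ) : (M * A ^ s).IsHermitian := by
  rw [IsHermitian, conjTranspose_mul, conjTranspose_pow, hM.eq]
  exact ((semiconjBy_conjTranspose hM hMA).pow_right s).eq.symm

lemma posSemidef_mul_pow {R : Type*} [Ring R] [PartialOrder R] [StarRing R] {M A : Matrix n n R}
    (hM : M.PosSemidef) (hMA : (M * A).PosSemidef) (s : ℕ) : (M * A ^ s).PosSemidef := by
  induction s using Nat.twoStepInduction with
  | zero => simpa only [pow_zero, mul_one] using hM
  | one => simpa only [pow_one] using hMA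
  | more s ih _ =>
    have hconj : M * A ^ (s + 2) = Aᴴ * (M * A ^ s) * A := by
      rw [← mul_assoc, ← (semiconjBy_conjTranspose hM.1 hMA.1).eq, pow_succ, pow_succ']
      simp only [mul_assoc]
    rw [hconj]
    exact ih.conjTranspose_mul_mul_same A

lemma isHermitian_diagonal_mul_iff {R : Type*} [CommSemiring R] [StarRing R] [TrivialStar R]
    {d : n → R} {A : Matrix n n R} :
    (diagonal d * A).IsHermitian ↔ ∀ i j, d i * A i j = d j * A j i := by
  simp only [IsHermitian.ext_iff, diagonal_mul, star_trivial]
  exact forall_comm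

lemma le_apply_self_of_posSemidef_diagonal_mul {R : Type*} [CommRing R] [LinearOrder R]
    [IsStrictOrderedRing R] [StarRing R] [TrivialStar R] {Q : Matrix n n R} {π : n → R}
    (hQ : Q ∈ rowStochastic R n) (hπ1 : ∑ i, π i = 1) (hQπ : (diagonal π * Q).PosSemidef)
    (i : n) : π i ≤ Q i i := by
  obtain hi | hi := le_or_gt (π i) 0
  · exact hi.trans (nonneg_of_mem_rowStochastic hQ)
  have hrow (k : n) : ∑ j, (diagonal π * Q) k j = π k := by
    simp only [diagonal_mul, ← mul_sum, sum_row_of_mem_rowStochastic hQ, mul_one]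
  have hcs : π i * π i ≤ π i * Q i i := by
    have hsum := sq_sum_row_le_diag_mul_sum hQπ i
    simp only [hrow, hπ1] at hsum
    rwa [diagonal_mul, mul_one, sq] at hsum
  exact le_of_mul_le_mul_left hcs hi

lemma posSemidef_diagonal_mul_of_half_le_diag {P : Matrix n n ℝ} {π : n → ℝ}
    (hP : P ∈ rowStochastic ℝ n) (hπ0 : ∀ i, 0 ≤ π i) (hrev : (diagonal π * P).IsHermitian)
    (hlazy : ∀ i, 1 / 2 ≤ P i i) : (diagonal π * P).PosSemidef := by
  refine posSemidef_of_sum_norm_erase_le_diag hrev fun i => ?_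
  have hoff : ∑ j ∈ univ.erase i, P i j = 1 - P i i := by
    rw [sum_erase_eq_sub (mem_univ i), sum_row_of_mem_rowStochastic hP]
  calc
    ∑ j ∈ univ.erase i, ‖(diagonal π * P) i j‖ = ∑ j ∈ univ.erase i, π i * P i j := by
      refine sum_congr rfl fun j _ => ?_
      rw [diagonal_mul, Real.norm_of_nonneg
        (mul_nonneg (hπ0 i) (nonneg_of_mem_rowStochastic hP))]
    _ = π i * (1 - P i i) := by rw [← mul_sum, hoff]
    _ ≤ π i * P i i := mul_le_mul_of_nonneg_left (by linarith [hlazy i]) (hπ0 i)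
    _ = RCLike.re ((diagonal π * P) i i) := by rw [diagonal_mul, RCLike.re_to_real]

lemma pow_apply_div_comm {R : Type*} [Semifield R] [StarRing R] [TrivialStar R] {P : Matrix n n R}
    {π : n → R} (hπ0 : ∀ i, π i ≠ 0) (hrev : (diagonal π * P).IsHermitian) (s : ℕ) (i j : n) :
    (P ^ s) i j / π j = (P ^ s) j i / π i := by
  have hbalance := isHermitian_diagonal_mul_iff.mp
    (isHermitian_mul_pow (isHermitian_diagonal π) hrev s) i j
  rw [div_eq_div_iff (hπ0 j) (hπ0 i), mul_comm, hbalance, mul_comm]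

end Matrix

section HittingTime

variable {Ω : Type*} [Fintype Ω] [DecidableEq Ω] {P : Matrix Ω Ω ℝ}

lemma hitProb_nonneg (hP0 : ∀ x y, 0 ≤ P x y) (z : Ω) (t : ℕ) (x : Ω) : 0 ≤ hitProb P z t x := by
  induction t generalizing x with
  | zero => rw [hitProb]; positivity
  | succ t ih =>
    rw [hitProb]
    split_ifs
    · exact le_rfl
    · exact sum_nonneg fun y _ => mul_nonneg (hP0 x y) (ih y)

lemma hitConv_nonneg (hP0 : ∀ x y, 0 ≤ P x y) (z x y : Ω) (k : ℕ) : 0 ≤ hitConv P z x y k :=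
  sum_nonneg fun _ _ => mul_nonneg (hitProb_nonneg hP0 z _ x) (hitProb_nonneg hP0 z _ y)

lemma sum_hitProb_mul_pow_le_pow (hP0 : ∀ x y, 0 ≤ P x y) (z x y : Ω) (t : ℕ) :
    ∑ j ∈ range (t + 1), hitProb P z j x * (P ^ (t - j)) z y ≤ (P ^ t) x y := by
  induction t generalizing x with
  | zero =>
    by_cases hxz : x = z
    · simp [hitProb, hxz]
    · simpa [hitProb, hxz] using Matrix.pow_apply_nonneg hP0 0 x y
  | succ t ih =>
    rw [sum_range_succ']
    by_cases hxz : x = z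
    · simp [hitProb, hxz]
    · calc
        _ = ∑ j ∈ range (t + 1), (∑ u, P x u * hitProb P z j u) * (P ^ (t - j)) z y := by
          simp only [hitProb, hxz, if_false, zero_mul, add_zero, Nat.add_sub_add_right]
        _ = ∑ u, P x u * ∑ j ∈ range (t + 1), hitProb P z j u * (P ^ (t - j)) z y := by
          simp only [sum_mul, mul_sum, mul_assoc]
          exact sum_comm
        _ ≤ ∑ u, P x u * (P ^ t) u y :=
          sum_le_sum fun u _ => mul_le_mul_of_nonneg_left (ih u) (hP0 x u)
        _ = (P ^ (t + 1)) x y := by rw [pow_succ', Matrix.mul_apply]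

lemma sum_hitProb_mul_pow_div_le (hP0 : ∀ x y, 0 ≤ P x y) {c : ℝ} (hc : 0 ≤ c) (z x y : Ω)
    (t : ℕ) :
    ∑ j ∈ range (t + 1), hitProb P z j x * ((P ^ (t - j)) z y / c) ≤ (P ^ t) x y / c := by
  simp only [← mul_div_assoc, ← sum_div]
  exact div_le_div_of_nonneg_right (sum_hitProb_mul_pow_le_pow hP0 z x y t) hc

lemma sum_hitConv_mul_pow_div_le (hP0 : ∀ x y, 0 ≤ P x y) {π : Ω → ℝ} (hπ0 : ∀ x, 0 < π x)
    (hrev : (Matrix.diagonal π * P).IsHermitian) (x y z : Ω) (t : ℕ) :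
    ∑ k ∈ range (t + 1), hitConv P z x y k * ((P ^ (t - k)) z z / π z) ≤ (P ^ t) x y / π y := by
  calc
    _ = ∑ j ∈ range (t + 1), hitProb P z j x *
          ∑ i ∈ range (t - j + 1), hitProb P z i y * ((P ^ (t - j - i)) z z / π z) :=
      sum_range_convolution_assoc (hitProb P z · x) (hitProb P z · y)
        (fun s => (P ^ s) z z / π z) t
    _ ≤ ∑ j ∈ range (t + 1), hitProb P z j x * ((P ^ (t - j)) y z / π z) := by
      gcongr with j
      · exact hitProb_nonneg hP0 z j x
      · exact sum_hitProb_mul_pow_div_le hP0 (hπ0 z).le z y z (t - j)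
    _ = ∑ j ∈ range (t + 1), hitProb P z j x * ((P ^ (t - j)) z y / π y) := by
      simp only [pow_apply_div_comm (fun x => (hπ0 x).ne') hrev _ y z]
    _ ≤ (P ^ t) x y / π y := sum_hitProb_mul_pow_div_le hP0 (hπ0 y).le z x y t

end HittingTime

theorem stmt2_general {Ω : Type*} [Fintype Ω] [DecidableEq Ω] {P : Matrix Ω Ω ℝ} {π : Ω → ℝ}
    (hP : P ∈ Matrix.rowStochastic ℝ Ω) (hπ0 : ∀ x, 0 < π x) (hπ1 : ∑ x, π x = 1)
    (hPπ : (Matrix.diagonal π * P).PosSemidef) (x y z : Ω) (t : ℕ) :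
    (P ^ t) x y / π y ≥
        ∑ k ∈ range (t + 1), hitConv P z x y k * ((P ^ (t - k)) z z / π z)
      ∧
    ∑ k ∈ range (t + 1), hitConv P z x y k * ((P ^ (t - k)) z z / π z) ≥
        ∑ k ∈ range (t + 1), hitConv P z x y k := by
  refine ⟨sum_hitConv_mul_pow_div_le hP.1 hπ0 hPπ.isHermitian x y z t,
    sum_le_sum fun k _ => ?_⟩
  have hD : (Matrix.diagonal π).PosSemidef := .diagonal fun x => (hπ0 x).le
  have hreturn : π z ≤ (P ^ (t - k)) z z :=
    le_apply_self_of_posSemidef_diagonal_mul (pow_mem hP _) hπ1 (posSemidef_mul_pow hD hPπ _) z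
  exact le_mul_of_one_le_right (hitConv_nonneg hP.1 z x y k) ((one_le_div (hπ0 z)).mpr hreturn)

/-- For a finite irreducible lazy reversible Markov chain and
`x, y, z ∈ Ω`, for all `t ≥ 0`,
`P^t(x,y)/π(y) ≥ Σ_{k ≤ t} P[T_z^{x,y} = k]·P^{t-k}(z,z)/π(z) ≥ P[T_z^{x,y} ≤ t]`. -/
theorem stmt2 {Ω : Type*} [Fintype Ω] [Nonempty Ω] [DecidableEq Ω]
    (P : Matrix Ω Ω ℝ) (π : Ω → ℝ)
    (hP0 : ∀ x y, 0 ≤ P x y) (hP1 : ∀ x, ∑ y, P x y = 1)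
    (hπ0 : ∀ x, 0 < π x) (hπ1 : ∑ x, π x = 1)
    (hrev : ∀ x y, π x * P x y = π y * P y x)
    (hirr : ∀ x y, ∃ t : ℕ, 0 < (P ^ t) x y)
    (hlazy : ∀ x, (1 : ℝ) / 2 ≤ P x x)
    (x y z : Ω) (t : ℕ) :
    (P ^ t) x y / π y ≥
        ∑ k ∈ Finset.range (t + 1), hitConv P z x y k * ((P ^ (t - k)) z z / π z)
      ∧
    ∑ k ∈ Finset.range (t + 1), hitConv P z x y k * ((P ^ (t - k)) z z / π z) ≥
        ∑ k ∈ Finset.range (t + 1), hitConv P z x y k := by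
  have hP : P ∈ Matrix.rowStochastic ℝ Ω := Matrix.mem_rowStochastic_iff_sum.mpr ⟨hP0, hP1⟩
  exact stmt2_general hP hπ0 hπ1 (posSemidef_diagonal_mul_of_half_le_diag hP (fun x => (hπ0 x).le)
    (isHermitian_diagonal_mul_iff.mpr hrev) hlazy) x y z t
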